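/- Suppose the graph sequence {𝔾(t)} of the column stochastic matrix sequence {W(t)} is uniformly strongly connected. Let y(t+1) = W(t) y(t), y(0) = 𝟙, and S(t)_{ij} = W(t)_{ij} y_j(t) / y_i(t+1). Then for every fixed τ ≥ 0, the product S(t)⋯S(τ+1)S(τ) converges, as t → ∞, to the rank-one matrix (1/n) 𝟙 y(τ)ᵀ; that is, for all i, j: lim_{t→∞} [Φ_S(t+1,τ)]_{ij} = y_j(τ)/n, where Φ_S(t,τ) = S(t−1)⋯S(τ). -/

import Mathlib

open Filter Finset

/-- `matProd M τ k = M (τ+k-1) * ⋯ * M (τ+1) * M τ` (the product of `k` factors),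
i.e. the state-transition matrix `Φ_M (τ+k, τ)`. -/
def matProd {n : ℕ} (M : ℕ → Matrix (Fin n) (Fin n) ℝ) (τ : ℕ) : ℕ → Matrix (Fin n) (Fin n) ℝ
  | 0 => 1
  | k + 1 => M (τ + k) * matProd M τ k

/-!
Column `j` of `Φ_S(τ + k, τ)`, multiplied entrywise by `y (τ + k)`, solves the same recursion
`x (t + 1) = W t *ᵥ x t` as `y`, and its entries sum to `y τ j`. So the theorem is the push-sum
theorem: if `x` and `y` solve this recursion and `0 < y`, all ratios `x t i / y t i` tend to
`(∑ i, x 0 i) / ∑ i, y 0 i`.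

Subtracting a multiple of `y` from `x`, assume that `x` has sum zero. Let `B` be the largest of the
`|x t i / y t i|`. Then `B • y ± x` are nonnegative at time `t`. By connectivity, within
`N = card ι * L` steps every node receives at least the fraction `β ^ N` of the mass held by any
other node, so at time `t + N` every entry of `B • y ± x` is at least a fixed proportion of the
total mass `B * ∑ i, y t i`. This shrinks `B` by a constant factor below one.
-/

section

open Matrix Topology

variable {ι R : Type*}

/-- The time-varying directed graph in which `E t u v` is an arc from `u` to `v` at time `t` is
*uniformly strongly connected* with window `L` if every union of `L` consecutive graphs is
strongly connected. Connectivity is by possibly empty paths, so that a single vertex needs no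
loop. -/
def UniformlyStronglyConnected (E : ℕ → ι → ι → Prop) (L : ℕ) : Prop :=
  ∀ t i j, Relation.ReflTransGen (fun u v => ∃ k ∈ Ico t (t + L), E k u v) i j

namespace UniformlyStronglyConnected

variable {E : ℕ → ι → ι → Prop} {L : ℕ}

lemma shift (hE : UniformlyStronglyConnected E L) (s : ℕ) :
    UniformlyStronglyConnected (fun t => E (s + t)) L := by
  refine fun t i j => Relation.ReflTransGen.mono ?_ _ _ (hE (s + t) i j)
  rintro u v ⟨k, hk, huv⟩
  rw [mem_Ico] at hk
  obtain ⟨r, rfl⟩ : ∃ r, k = s + r := Nat.exists_eq_add_of_le (by lia)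
  exact ⟨r, mem_Ico.2 (by lia), huv⟩

variable [Fintype ι] {A : ℕ → Finset ι}

lemma eq_univ_of_eq_add (hE : UniformlyStronglyConnected E L) (hA : Monotone A)
    (hstep : ∀ t u v, E t u v → u ∈ A t → v ∈ A (t + 1)) {t : ℕ} (hne : (A t).Nonempty)
    (heq : A t = A (t + L)) : A t = univ := by
  obtain ⟨u, hu⟩ := hne
  refine eq_univ_of_forall fun v => ?_
  induction hE t u v with
  | refl => exact hu
  | tail _ harc ih =>
    obtain ⟨k, hk, harc⟩ := harc
    rw [mem_Ico] at hk
    rw [heq]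
    exact hA hk.2 (hstep k _ _ harc (hA hk.1 ih))

lemma eq_univ (hE : UniformlyStronglyConnected E L) (hA : Monotone A)
    (hstep : ∀ t u v, E t u v → u ∈ A t → v ∈ A (t + 1)) (hne : (A 0).Nonempty) :
    A (Fintype.card ι * L) = univ := by
  have hcard : ∀ m ≤ Fintype.card ι, m ≤ #(A (m * L)) := by
    intro m hm
    induction m with
    | zero => exact Nat.zero_le _
    | succ m ih =>
      have hsub : A (m * L) ⊆ A ((m + 1) * L) := hA (Nat.mul_le_mul_right L m.le_succ)
      obtain heq | hssub := hsub.eq_or_ssubset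
      · have huniv := hE.eq_univ_of_eq_add hA hstep (hne.mono (hA (Nat.zero_le _)))
          (by rwa [← Nat.succ_mul])
        rwa [← heq, huniv, card_univ]
      · exact (ih (Nat.le_of_succ_le hm)).trans_lt (card_lt_card hssub)
  exact eq_univ_of_card _ ((card_le_univ _).antisymm (hcard _ le_rfl))

end UniformlyStronglyConnected

/-- The sequence of vectors `x` is a solution of the linear time-varying system with matrices
`W`. -/
def IsTrajectory [Fintype ι] [NonUnitalNonAssocSemiring R] (W : ℕ → Matrix ι ι R)
    (x : ℕ → ι → R) : Prop :=
  ∀ t, x (t + 1) = W t *ᵥ x t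

namespace IsTrajectory

variable [Fintype ι]

lemma shift [NonUnitalNonAssocSemiring R] {W : ℕ → Matrix ι ι R} {x : ℕ → ι → R}
    (hx : IsTrajectory W x) (s : ℕ) :
    IsTrajectory (fun t => W (s + t)) (fun t => x (s + t)) :=
  fun t => hx (s + t)

lemma const_smul {K : Type*} [NonUnitalNonAssocSemiring R] [DistribSMul K R]
    [SMulCommClass K R R] {W : ℕ → Matrix ι ι R} {x : ℕ → ι → R} (hx : IsTrajectory W x)
    (a : K) : IsTrajectory W (fun t => a • x t) :=
  fun t => by simp only [hx t, mulVec_smul]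

section Ring

variable [NonUnitalNonAssocRing R] {W : ℕ → Matrix ι ι R} {x y : ℕ → ι → R}

lemma neg (hx : IsTrajectory W x) : IsTrajectory W (fun t => -x t) :=
  fun t => by simp only [hx t, mulVec_neg]

lemma sub (hx : IsTrajectory W x) (hy : IsTrajectory W y) :
    IsTrajectory W (fun t => x t - y t) :=
  fun t => by simp only [hx t, hy t, mulVec_sub]

end Ring

section OrderedSemiring

variable [Semiring R] [PartialOrder R]
  {W : ℕ → Matrix ι ι R} {x y : ℕ → ι → R} {β : R} {L : ℕ}

lemma sum_eq [IsOrderedRing R] [DecidableEq ι] (hx : IsTrajectory W x)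
    (hW : ∀ t, W t ∈ colStochastic R ι) (t : ℕ) : ∑ i, x t i = ∑ i, x 0 i := by
  induction t with
  | zero => rfl
  | succ t ih => rw [hx t, sum_mulVec_of_mem_colStochastic (hW t), ih]

lemma le_of_le [IsOrderedRing R] (hx : IsTrajectory W x) (hy : IsTrajectory W y)
    (hW : ∀ t i j, 0 ≤ W t i j) {s t : ℕ} (hst : s ≤ t) (h : x s ≤ y s) : x t ≤ y t := by
  induction t, hst using Nat.le_induction with
  | base => exact h
  | succ t _ ih =>
    rw [hx t, hy t]
    exact fun i => sum_le_sum fun j _ => mul_le_mul_of_nonneg_left (ih j) (hW t i j)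

lemma nonneg_of_le [IsOrderedRing R] (hx : IsTrajectory W x) (hW : ∀ t i j, 0 ≤ W t i j)
    {s t : ℕ} (hst : s ≤ t) (h : 0 ≤ x s) : 0 ≤ x t := by
  have hzero : IsTrajectory W (fun _ => 0) := fun t => (mulVec_zero (W t)).symm
  exact hzero.le_of_le hx hW hst h

lemma pos [IsStrictOrderedRing R] (hx : IsTrajectory W x) (hW : ∀ t i j, 0 ≤ W t i j)
    (hdiag : ∀ t i, 0 < W t i i) (h0 : ∀ i, 0 < x 0 i) (t : ℕ) (i : ι) : 0 < x t i := by
  induction t generalizing i with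
  | zero => exact h0 i
  | succ t ih =>
    rw [hx t]
    exact sum_pos' (fun j _ => mul_nonneg (hW t i j) (ih j).le)
      ⟨i, mem_univ i, mul_pos (hdiag t i) (ih i)⟩

variable [IsOrderedRing R]

lemma mul_le_succ (hx : IsTrajectory W x) (hW : ∀ t i j, 0 ≤ W t i j) {t : ℕ}
    (hxt : 0 ≤ x t) {i j : ι} (hβ : β ≤ W t i j) : β * x t j ≤ x (t + 1) i := by
  rw [hx t]
  exact (mul_le_mul_of_nonneg_right hβ (hxt j)).trans
    (single_le_sum (fun l _ => mul_nonneg (hW t i l) (hxt l)) (mem_univ j))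

lemma pow_mul_le (hx : IsTrajectory W x) (hW : ∀ t i j, 0 ≤ W t i j) (hβ : 0 ≤ β)
    (hdiag : ∀ t i, β ≤ W t i i) (hconn : UniformlyStronglyConnected (fun t u v => β ≤ W t v u) L)
    {t : ℕ} (hxt : 0 ≤ x t) (i j : ι) :
    β ^ (Fintype.card ι * L) * x t j ≤ x (t + Fintype.card ι * L) i := by
  classical
  let A : ℕ → Finset ι := fun k => {v | β ^ k * x t j ≤ x (t + k) v}
  have hstep : ∀ k u v, β ≤ W (t + k) v u → u ∈ A k → v ∈ A (k + 1) := by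
    intro k u v harc hu
    simp only [A, mem_filter_univ] at hu ⊢
    calc β ^ (k + 1) * x t j = β * (β ^ k * x t j) := by rw [pow_succ', mul_assoc]
      _ ≤ β * x (t + k) u := mul_le_mul_of_nonneg_left hu hβ
      _ ≤ x (t + k + 1) v :=
        hx.mul_le_succ hW (hx.nonneg_of_le hW (Nat.le_add_right t k) hxt) harc
  have hA : Monotone A := monotone_nat_of_le_succ fun k v => hstep k v v (hdiag _ v)
  have hj : (A 0).Nonempty := ⟨j, by simp [A]⟩
  have hi : i ∈ A (Fintype.card ι * L) := (hconn.shift t).eq_univ hA hstep hj ▸ mem_univ i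
  simpa only [A, mem_filter_univ] using hi

lemma pow_mul_sum_le (hx : IsTrajectory W x) (hW : ∀ t i j, 0 ≤ W t i j) (hβ : 0 ≤ β)
    (hdiag : ∀ t i, β ≤ W t i i) (hconn : UniformlyStronglyConnected (fun t u v => β ≤ W t v u) L)
    {t : ℕ} (hxt : 0 ≤ x t) (i : ι) :
    β ^ (Fintype.card ι * L) * ∑ j, x t j ≤
      Fintype.card ι • x (t + Fintype.card ι * L) i := by
  rw [mul_sum]
  exact sum_le_card_nsmul _ _ _ fun j _ => hx.pow_mul_le hW hβ hdiag hconn hxt i j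

end OrderedSemiring

end IsTrajectory

lemma norm_div_le_iff_of_pos [Fintype ι] [Nonempty ι] {x y : ι → ℝ} (hy : ∀ i, 0 < y i) {B : ℝ} :
    ‖x / y‖ ≤ B ↔ x ≤ B • y ∧ -x ≤ B • y := by
  simp only [pi_norm_le_iff_of_nonempty, Pi.le_def, ← forall_and]
  refine forall_congr' fun i => ?_
  rw [Pi.div_apply, Real.norm_eq_abs, abs_div, abs_of_pos (hy i), div_le_iff₀ (hy i), abs_le']
  rfl

lemma tendsto_zero_of_antitone_of_add_le_mul {f : ℕ → ℝ} (hf : Antitone f) (hnonneg : ∀ t, 0 ≤ f t)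
    {ρ : ℝ} (hρ : ρ < 1) {N : ℕ} (hle : ∀ t, f (t + N) ≤ ρ * f t) :
    Tendsto f atTop (𝓝 0) := by
  have hlim : Tendsto f atTop (𝓝 (⨅ t, f t)) :=
    tendsto_atTop_ciInf hf ⟨0, Set.forall_mem_range.2 hnonneg⟩
  have hle_mul : ⨅ t, f t ≤ ρ * ⨅ t, f t :=
    le_of_tendsto_of_tendsto' ((tendsto_add_atTop_iff_nat N).2 hlim) (hlim.const_mul ρ) hle
  have hzero : ⨅ t, f t = 0 := by nlinarith only [hle_mul, hρ, le_ciInf hnonneg]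
  rwa [hzero] at hlim

namespace IsTrajectory

variable [Fintype ι] {W : ℕ → Matrix ι ι ℝ} {x y : ℕ → ι → ℝ} {β : ℝ} {L : ℕ}

lemma antitone_norm_div [Nonempty ι] (hx : IsTrajectory W x) (hy : IsTrajectory W y)
    (hW : ∀ t i j, 0 ≤ W t i j) (hypos : ∀ t i, 0 < y t i) :
    Antitone fun t => ‖x t / y t‖ := by
  intro s t hst
  obtain ⟨hle, hneg_le⟩ := (norm_div_le_iff_of_pos (hypos s)).1 le_rfl
  exact (norm_div_le_iff_of_pos (hypos t)).2
    ⟨hx.le_of_le (hy.const_smul _) hW hst hle, hx.neg.le_of_le (hy.const_smul _) hW hst hneg_le⟩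

variable [DecidableEq ι]

lemma le_smul_of_sum_eq_zero (hx : IsTrajectory W x) (hy : IsTrajectory W y)
    (hW : ∀ t, W t ∈ colStochastic ℝ ι) (hβ : 0 ≤ β) (hdiag : ∀ t i, β ≤ W t i i)
    (hconn : UniformlyStronglyConnected (fun t u v => β ≤ W t v u) L)
    (hynonneg : ∀ t i, 0 ≤ y t i) (hsum : ∑ i, x 0 i = 0) {B : ℝ} (hB : 0 ≤ B) {t : ℕ}
    (hle : x t ≤ B • y t) :
    x (t + Fintype.card ι * L) ≤
      ((1 - β ^ (Fintype.card ι * L) / Fintype.card ι) * B) • y (t + Fintype.card ι * L) := by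
  intro i
  set N := Fintype.card ι * L
  have hcard : (0 : ℝ) < Fintype.card ι := Nat.cast_pos.2 (Fintype.card_pos_iff.2 ⟨i⟩)
  have hgap : IsTrajectory W (fun t => B • y t - x t) := (hy.const_smul B).sub hx
  have hgap_sum : ∑ j, (B • y t - x t) j = B * ∑ j, y t j := by
    simp only [Pi.sub_apply, Pi.smul_apply, smul_eq_mul, sum_sub_distrib, ← mul_sum,
      hx.sum_eq hW t, hsum, sub_zero]
  have hy_le : y (t + N) i ≤ ∑ j, y t j := by
    rw [hy.sum_eq hW t, ← hy.sum_eq hW (t + N)]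
    exact single_le_sum (fun j _ => hynonneg _ j) (mem_univ i)
  have hgap_le : β ^ N * (B * y (t + N) i) ≤ Fintype.card ι * (B * y (t + N) i - x (t + N) i) :=
    calc β ^ N * (B * y (t + N) i) ≤ β ^ N * ∑ j, (B • y t - x t) j := by
          rw [hgap_sum]; gcongr
      _ ≤ Fintype.card ι • (B • y (t + N) - x (t + N)) i :=
          hgap.pow_mul_sum_le (fun t i j => (hW t).1 i j) hβ hdiag hconn (sub_nonneg.2 hle) i
      _ = Fintype.card ι * (B * y (t + N) i - x (t + N) i) := nsmul_eq_mul _ _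
  rw [← div_le_iff₀' hcard] at hgap_le
  calc x (t + N) i ≤ B * y (t + N) i - β ^ N * (B * y (t + N) i) / Fintype.card ι := by
        linarith only [hgap_le]
    _ = (1 - β ^ N / Fintype.card ι) * B * y (t + N) i := by ring

lemma norm_div_add_le_of_sum_eq_zero [Nonempty ι] (hx : IsTrajectory W x) (hy : IsTrajectory W y)
    (hW : ∀ t, W t ∈ colStochastic ℝ ι) (hβ : 0 ≤ β) (hdiag : ∀ t i, β ≤ W t i i)
    (hconn : UniformlyStronglyConnected (fun t u v => β ≤ W t v u) L)
    (hypos : ∀ t i, 0 < y t i) (hsum : ∑ i, x 0 i = 0) (t : ℕ) :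
    ‖x (t + Fintype.card ι * L) / y (t + Fintype.card ι * L)‖ ≤
      (1 - β ^ (Fintype.card ι * L) / Fintype.card ι) * ‖x t / y t‖ := by
  obtain ⟨hle, hneg_le⟩ := (norm_div_le_iff_of_pos (hypos t)).1 le_rfl
  have hynonneg : ∀ t i, 0 ≤ y t i := fun t i => (hypos t i).le
  have hneg_sum : ∑ i, (-x 0) i = 0 := by simp only [Pi.neg_apply, sum_neg_distrib, hsum, neg_zero]
  exact (norm_div_le_iff_of_pos (hypos _)).2
    ⟨hx.le_smul_of_sum_eq_zero hy hW hβ hdiag hconn hynonneg hsum (norm_nonneg _) hle,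
      hx.neg.le_smul_of_sum_eq_zero hy hW hβ hdiag hconn hynonneg hneg_sum (norm_nonneg _) hneg_le⟩

lemma tendsto_div_zero_of_sum_eq_zero (hx : IsTrajectory W x) (hy : IsTrajectory W y)
    (hW : ∀ t, W t ∈ colStochastic ℝ ι) (hβ : 0 < β) (hdiag : ∀ t i, β ≤ W t i i)
    (hconn : UniformlyStronglyConnected (fun t u v => β ≤ W t v u) L)
    (hypos : ∀ t i, 0 < y t i) (hsum : ∑ i, x 0 i = 0) (i : ι) :
    Tendsto (fun t => x t i / y t i) atTop (𝓝 0) := by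
  have : Nonempty ι := ⟨i⟩
  have hρ : 1 - β ^ (Fintype.card ι * L) / Fintype.card ι < 1 :=
    sub_lt_self _ (div_pos (pow_pos hβ _) (Nat.cast_pos.2 Fintype.card_pos))
  have hnorm : Tendsto (fun t => ‖x t / y t‖) atTop (𝓝 0) :=
    tendsto_zero_of_antitone_of_add_le_mul
      (hx.antitone_norm_div hy (fun t i j => (hW t).1 i j) hypos) (fun _ => norm_nonneg _) hρ
      (hx.norm_div_add_le_of_sum_eq_zero hy hW hβ.le hdiag hconn hypos hsum)
  exact squeeze_zero_norm (fun t => norm_le_pi_norm (x t / y t) i) hnorm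

theorem tendsto_div (hx : IsTrajectory W x) (hy : IsTrajectory W y)
    (hW : ∀ t, W t ∈ colStochastic ℝ ι) (hβ : 0 < β) (hdiag : ∀ t i, β ≤ W t i i)
    (hconn : UniformlyStronglyConnected (fun t u v => β ≤ W t v u) L)
    (hypos : ∀ t i, 0 < y t i) (i : ι) :
    Tendsto (fun t => x t i / y t i) atTop (𝓝 ((∑ j, x 0 j) / ∑ j, y 0 j)) := by
  set a := (∑ j, x 0 j) / ∑ j, y 0 j
  have hysum : 0 < ∑ j, y 0 j := sum_pos (fun j _ => hypos 0 j) ⟨i, mem_univ i⟩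
  have hsum : ∑ j, (x 0 - a • y 0) j = 0 := by
    simp only [Pi.sub_apply, Pi.smul_apply, smul_eq_mul, sum_sub_distrib, ← mul_sum, a,
      div_mul_cancel₀ _ hysum.ne', sub_self]
  have hdev := (hx.sub (hy.const_smul a)).tendsto_div_zero_of_sum_eq_zero hy hW hβ hdiag hconn
    hypos hsum i
  refine tendsto_sub_nhds_zero_iff.1 (hdev.congr fun t => ?_)
  rw [Pi.sub_apply, Pi.smul_apply, smul_eq_mul, sub_div, mul_div_cancel_right₀ _ (hypos t i).ne']

end IsTrajectory

lemma isTrajectory_mul_of_normalized [Fintype ι] [Field R] {W S P : ℕ → Matrix ι ι R}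
    {y : ℕ → ι → R} (hy : ∀ t i, y t i ≠ 0)
    (hS : ∀ t i j, S t i j = W t i j * y t j / y (t + 1) i)
    (hP : ∀ t, P (t + 1) = S t * P t) (j : ι) :
    IsTrajectory W (fun t i => P t i j * y t i) := by
  intro t
  ext i
  simp only [hP t, mul_apply, sum_mul, mulVec, dotProduct]
  refine sum_congr rfl fun l _ => ?_
  rw [hS t]
  field_simp [hy (t + 1) i]

theorem stmt_11_general [Fintype ι] [DecidableEq ι] {W : ℕ → Matrix ι ι ℝ}
    (hW : ∀ t, W t ∈ colStochastic ℝ ι) {β : ℝ} (hβ : 0 < β) (hdiag : ∀ t i, β ≤ W t i i) {L : ℕ}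
    (hconn : UniformlyStronglyConnected (fun t u v => β ≤ W t v u) L)
    {y : ℕ → ι → ℝ} (hy0 : ∀ i, 0 < y 0 i) (hy : IsTrajectory W y) {S : ℕ → Matrix ι ι ℝ}
    (hS : ∀ t i j, S t i j = W t i j * y t j / y (t + 1) i) (τ : ℕ) {P : ℕ → Matrix ι ι ℝ}
    (hP0 : P 0 = 1) (hP : ∀ k, P (k + 1) = S (τ + k) * P k) (i j : ι) :
    Tendsto (fun k => P k i j) atTop (𝓝 (y τ j / ∑ l, y 0 l)) := by
  have hypos : ∀ t i, 0 < y t i :=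
    hy.pos (fun t i j => (hW t).1 i j) (fun t i => hβ.trans_le (hdiag t i)) hy0
  have hx : IsTrajectory (fun k => W (τ + k)) (fun k i => P k i j * y (τ + k) i) :=
    isTrajectory_mul_of_normalized (fun k i => (hypos (τ + k) i).ne') (fun k => hS (τ + k)) hP j
  have hxsum : ∑ l, P 0 l j * y (τ + 0) l = y τ j := by
    simp only [hP0, one_apply, ite_mul, one_mul, zero_mul, sum_ite_eq', mem_univ, if_true, add_zero]
  have hlim := hx.tendsto_div (hy.shift τ) (fun k => hW (τ + k)) hβ (fun k => hdiag (τ + k))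
    (hconn.shift τ) (fun k => hypos (τ + k)) i
  rw [hxsum, hy.sum_eq hW] at hlim
  exact hlim.congr fun k => mul_div_cancel_right₀ _ (hypos (τ + k) i).ne'

end

theorem stmt_11
    (n : ℕ) (hn : 0 < n)
    (W : ℕ → Matrix (Fin n) (Fin n) ℝ)
    (hWnonneg : ∀ t i j, 0 ≤ W t i j)
    (hWcol : ∀ t j, ∑ i, W t i j = 1)
    (hWdiag : ∀ t i, 0 < W t i i)
    (β : ℝ) (hβ : 0 < β)
    (hWβ : ∀ t i j, 0 < W t i j → β ≤ W t i j)
    (L : ℕ) (hL : 0 < L)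
    (hUSC : ∀ t : ℕ, ∀ i j : Fin n,
      Relation.TransGen (fun u v : Fin n => ∃ k ∈ Finset.Ico t (t + L), 0 < W k v u) i j)
    (y : ℕ → Fin n → ℝ)
    (hy0 : ∀ i, y 0 i = 1)
    (hyrec : ∀ t i, y (t + 1) i = ∑ j, W t i j * y t j)
    (S : ℕ → Matrix (Fin n) (Fin n) ℝ)
    (hS : ∀ t i j, S t i j = W t i j * y t j / y (t + 1) i)
    :
    ∀ τ : ℕ, ∀ i j : Fin n,
      Filter.Tendsto (fun k => matProd S τ k i j) Filter.atTop (nhds (y τ j / n)) := by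
  have hconn : UniformlyStronglyConnected (fun t u v => β ≤ W t v u) L := fun t i j =>
    Relation.ReflTransGen.mono (fun u v ⟨k, hk, harc⟩ => ⟨k, hk, hWβ k v u harc⟩) _ _
      (hUSC t i j).to_reflTransGen
  intro τ i j
  simpa [hy0] using stmt_11_general
    (fun t => Matrix.mem_colStochastic_iff_sum.2 ⟨hWnonneg t, hWcol t⟩) hβ
    (fun t i => hWβ t i i (hWdiag t i)) hconn (fun i => (hy0 i).symm ▸ one_pos)
    (fun t => funext (hyrec t)) hS τ (P := matProd S τ) rfl (fun _ => rfl) i j
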